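/- arXiv:2510.11071 — 2 statements merged into one kernel-verified Lean document; each statement's English description precedes it below -/
import Mathlib

section
/- Let B_n be the Bernstein operator on [0,1] and k a positive integer. For every f ∈ C^{2k}([0,1]), ‖(B_n - I)^k f‖_∞ ≤ C(k) · ‖f‖_{C^{2k}} · n^{-k}, where ‖f‖_{C^{2k}} = ∑_{j=0}^{2k} ‖f^{(j)}‖_∞ and C(k) depends only on k. -/
/-- The Bernstein operator of degree `n` on `[0,1]`. -/
noncomputable def bernsteinOp (n : ℕ) (f : ℝ → ℝ) (x : ℝ) : ℝ :=
  ∑ k ∈ Finset.range (n + 1),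
    f (k / n) * (n.choose k : ℝ) * x ^ k * (1 - x) ^ (n - k)

/-- Recursive smoothness predicate: `f` has `N` derivatives on `[0,1]`, all bounded by `M`. -/
def SmoothB : ℕ → ℝ → (ℝ → ℝ) → Prop
  | 0, M, f => ∀ x ∈ Set.Icc (0 : ℝ) 1, |f x| ≤ M
  | N + 1, M, f => (∀ x ∈ Set.Icc (0 : ℝ) 1, |f x| ≤ M) ∧ ∃ f' : ℝ → ℝ,
      (∀ x ∈ Set.Icc (0 : ℝ) 1, HasDerivWithinAt f (f' x) (Set.Icc (0 : ℝ) 1) x) ∧ SmoothB N M f'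

lemma SmoothB.bound {N : ℕ} {M : ℝ} {f : ℝ → ℝ} (h : SmoothB N M f) :
    ∀ x ∈ Set.Icc (0 : ℝ) 1, |f x| ≤ M := by
  cases N with
  | zero => exact h
  | succ N => exact h.1

lemma SmoothB.nonneg {N : ℕ} {M : ℝ} {f : ℝ → ℝ} (h : SmoothB N M f) : 0 ≤ M :=
  (abs_nonneg _).trans (h.bound 0 (by simp))

lemma SmoothB.mono {N : ℕ} : ∀ {M M' : ℝ} {f : ℝ → ℝ}, SmoothB N M f → M ≤ M' →
    SmoothB N M' f := by
  induction N with
  | zero => intro M M' f h hM x hx; exact (h x hx).trans hM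
  | succ N ih =>
    rintro M M' f ⟨h1, f', h2, h3⟩ hM
    exact ⟨fun x hx => (h1 x hx).trans hM, f', h2, ih h3 hM⟩

lemma SmoothB.pred {N : ℕ} : ∀ {M : ℝ} {f : ℝ → ℝ}, SmoothB (N + 1) M f → SmoothB N M f := by
  induction N with
  | zero => intro M f h; exact h.1
  | succ N ih =>
    rintro M f ⟨h1, f', h2, h3⟩
    exact ⟨h1, f', h2, ih h3⟩

lemma SmoothB.of_le {N N' : ℕ} {M : ℝ} {f : ℝ → ℝ} (h : SmoothB N' M f) (hN : N ≤ N') :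
    SmoothB N M f := by
  induction hN with
  | refl => exact h
  | step _ ih => exact ih h.pred

lemma SmoothB.congr {N : ℕ} {M : ℝ} {f g : ℝ → ℝ} (h : SmoothB N M f)
    (hfg : ∀ x ∈ Set.Icc (0 : ℝ) 1, g x = f x) : SmoothB N M g := by
  cases N with
  | zero => intro x hx; rw [hfg x hx]; exact h x hx
  | succ N =>
    obtain ⟨h1, f', h2, h3⟩ := h
    exact ⟨fun x hx => by rw [hfg x hx]; exact h1 x hx, f',
      fun x hx => (h2 x hx).congr hfg (hfg x hx), h3⟩

lemma SmoothB.add {N : ℕ} : ∀ {M M' : ℝ} {f g : ℝ → ℝ}, SmoothB N M f → SmoothB N M' g →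
    SmoothB N (M + M') (fun x => f x + g x) := by
  induction N with
  | zero => intro M M' f g h h' x hx; exact (abs_add_le _ _).trans (add_le_add (h x hx) (h' x hx))
  | succ N ih =>
    rintro M M' f g ⟨h1, f', h2, h3⟩ ⟨k1, g', k2, k3⟩
    exact ⟨fun x hx => (abs_add_le _ _).trans (add_le_add (h1 x hx) (k1 x hx)),
      fun x => f' x + g' x, fun x hx => (h2 x hx).add (k2 x hx), ih h3 k3⟩

lemma SmoothB.const_mul {N : ℕ} (c : ℝ) : ∀ {M : ℝ} {f : ℝ → ℝ}, SmoothB N M f →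
    SmoothB N (|c| * M) (fun x => c * f x) := by
  induction N with
  | zero =>
    intro M f h x hx
    rw [abs_mul]
    exact mul_le_mul_of_nonneg_left (h x hx) (abs_nonneg _)
  | succ N ih =>
    rintro M f ⟨h1, f', h2, h3⟩
    refine ⟨fun x hx => ?_, fun x => c * f' x, fun x hx => (h2 x hx).const_mul c, ih h3⟩
    rw [abs_mul]
    exact mul_le_mul_of_nonneg_left (h1 x hx) (abs_nonneg _)

lemma SmoothB.zero (N : ℕ) : SmoothB N 0 (fun _ => 0) := by
  induction N with
  | zero => intro x _; simp
  | succ N ih => exact ⟨fun x _ => by simp, fun _ => 0, fun x _ => hasDerivWithinAt_const _ _ _, ih⟩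

/-- Mean value theorem on subintervals of `[0,1]`. -/
lemma mvt_aux {f f' : ℝ → ℝ}
    (hf : ∀ x ∈ Set.Icc (0 : ℝ) 1, HasDerivWithinAt f (f' x) (Set.Icc (0 : ℝ) 1) x)
    {a b : ℝ} (ha : 0 ≤ a) (hb : b ≤ 1) (hab : a < b) :
    ∃ c, a < c ∧ c < b ∧ f b - f a = f' c * (b - a) := by
  obtain ⟨c, hc, h⟩ := exists_hasDerivAt_eq_slope f f' hab
    (fun x hx => ((hf x ⟨ha.trans hx.1, hx.2.trans hb⟩).continuousWithinAt.mono
      (Set.Icc_subset_Icc ha hb)))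
    (fun x hx => (hf x ⟨ha.trans hx.1.le, hx.2.le.trans hb⟩).hasDerivAt
      (Icc_mem_nhds (ha.trans_lt hx.1) (hx.2.trans_le hb)))
  refine ⟨c, hc.1, hc.2, ?_⟩
  have : b - a ≠ 0 := by linarith
  rw [h]; field_simp

lemma lip_aux {f : ℝ → ℝ} {M : ℝ} (hf : SmoothB 1 M f) {x y : ℝ}
    (hx : x ∈ Set.Icc (0 : ℝ) 1) (hy : y ∈ Set.Icc (0 : ℝ) 1) :
    |f y - f x| ≤ M * |y - x| := by
  obtain ⟨-, f', h, h'⟩ := hf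
  have key : ∀ a b : ℝ, 0 ≤ a → b ≤ 1 → a < b → |f b - f a| ≤ M * |b - a| := by
    intro a b ha hb hab
    obtain ⟨c, h1, h2, h3⟩ := mvt_aux h ha hb hab
    rw [h3, abs_mul]
    exact mul_le_mul_of_nonneg_right (h' c ⟨by linarith, by linarith⟩) (abs_nonneg _)
  rcases lt_trichotomy x y with hlt | rfl | hlt
  · exact key x y hx.1 hy.2 hlt
  · simp
  · rw [abs_sub_comm, abs_sub_comm y]
    exact key y x hy.1 hx.2 hlt

lemma taylor_aux {f f' : ℝ → ℝ} {M : ℝ}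
    (h : ∀ x ∈ Set.Icc (0 : ℝ) 1, HasDerivWithinAt f (f' x) (Set.Icc (0 : ℝ) 1) x)
    (h' : SmoothB 1 M f') {x y : ℝ}
    (hx : x ∈ Set.Icc (0 : ℝ) 1) (hy : y ∈ Set.Icc (0 : ℝ) 1) :
    |f y - f x - f' x * (y - x)| ≤ M * (y - x) ^ 2 := by
  have key : ∃ c ∈ Set.Icc (0 : ℝ) 1, |c - x| ≤ |y - x| ∧ f y - f x = f' c * (y - x) := by
    rcases lt_trichotomy x y with hlt | rfl | hlt
    · obtain ⟨c, h1, h2, h3⟩ := mvt_aux h hx.1 hy.2 hlt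
      refine ⟨c, ⟨by linarith [hx.1], by linarith [hy.2]⟩, ?_, h3⟩
      rw [abs_of_nonneg, abs_of_nonneg] <;> linarith
    · exact ⟨x, hx, le_rfl, by simp⟩
    · obtain ⟨c, h1, h2, h3⟩ := mvt_aux h hy.1 hx.2 hlt
      refine ⟨c, ⟨by linarith [hy.1], by linarith [hx.2]⟩, ?_, by linarith⟩
      rw [abs_of_nonpos, abs_of_nonpos] <;> linarith
  obtain ⟨c, hc, h1, h2⟩ := key
  have h3 := lip_aux h' hx hc
  have hM := h'.nonneg
  rw [h2, ← sub_mul, abs_mul, ← sq_abs, pow_two, ← mul_assoc]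
  exact mul_le_mul_of_nonneg_right (h3.trans (mul_le_mul_of_nonneg_left h1 hM)) (abs_nonneg _)

/-- Difference quotient in the derivative of a Bernstein polynomial. -/
noncomputable def dq (p : ℕ) (f : ℝ → ℝ) (t : ℝ) : ℝ :=
  (p + 1) * (f ((p * t + 1) / (p + 1)) - f (p * t / (p + 1)))

lemma dq_mem1 (p : ℕ) {t : ℝ} (ht : t ∈ Set.Icc (0 : ℝ) 1) :
    (p * t + 1) / ((p : ℝ) + 1) ∈ Set.Icc (0 : ℝ) 1 := by
  have hp : (0 : ℝ) ≤ p := Nat.cast_nonneg p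
  have := ht.1
  refine ⟨by positivity, ?_⟩
  rw [div_le_one (by positivity)]
  nlinarith [ht.2]

lemma dq_mem0 (p : ℕ) {t : ℝ} (ht : t ∈ Set.Icc (0 : ℝ) 1) :
    (p * t) / ((p : ℝ) + 1) ∈ Set.Icc (0 : ℝ) 1 := by
  have hp : (0 : ℝ) ≤ p := Nat.cast_nonneg p
  have := ht.1
  refine ⟨by positivity, ?_⟩
  rw [div_le_one (by positivity)]
  nlinarith [ht.2]

lemma dq_mvt (p : ℕ) {f f' : ℝ → ℝ}
    (h : ∀ x ∈ Set.Icc (0 : ℝ) 1, HasDerivWithinAt f (f' x) (Set.Icc (0 : ℝ) 1) x)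
    {t : ℝ} (ht : t ∈ Set.Icc (0 : ℝ) 1) :
    ∃ c ∈ Set.Icc (0 : ℝ) 1, |c - t| ≤ 1 / (p + 1) ∧ dq p f t = f' c := by
  have hp : (0 : ℝ) < (p : ℝ) + 1 := by positivity
  have e : (p * t + 1) / ((p : ℝ) + 1) = p * t / (p + 1) + 1 / (p + 1) := by ring
  have h0 : 0 < 1 / ((p : ℝ) + 1) := by positivity
  obtain ⟨c, h1, h2, h3⟩ := mvt_aux h (dq_mem0 p ht).1 (dq_mem1 p ht).2 (by rw [e]; linarith)
  refine ⟨c, ⟨(dq_mem0 p ht).1.trans h1.le, h2.le.trans (dq_mem1 p ht).2⟩, ?_, ?_⟩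
  · have e2 : t = p * t / (p + 1) + t * (1 / (p + 1)) := by field_simp
    have h4 : t * (1 / ((p : ℝ) + 1)) ≤ 1 / (p + 1) := by nlinarith [ht.2]
    have h5 : 0 ≤ t * (1 / ((p : ℝ) + 1)) := mul_nonneg ht.1 h0.le
    rw [e] at h2
    rw [abs_le]; constructor <;> linarith
  · rw [dq, h3, e]; field_simp; ring

lemma dq_deriv (p : ℕ) {f f' : ℝ → ℝ}
    (h : ∀ x ∈ Set.Icc (0 : ℝ) 1, HasDerivWithinAt f (f' x) (Set.Icc (0 : ℝ) 1) x)
    {t : ℝ} (ht : t ∈ Set.Icc (0 : ℝ) 1) :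
    HasDerivWithinAt (dq p f) ((p / (p + 1) : ℝ) * dq p f' t) (Set.Icc (0 : ℝ) 1) t := by
  have d1 : HasDerivWithinAt (fun t : ℝ => (p * t + 1) / ((p : ℝ) + 1)) ((p : ℝ) / (p + 1))
      (Set.Icc (0 : ℝ) 1) t := by
    simpa using ((((hasDerivWithinAt_id t (Set.Icc (0 : ℝ) 1)).const_mul (p : ℝ)).add_const
      (1 : ℝ)).div_const ((p : ℝ) + 1))
  have d0 : HasDerivWithinAt (fun t : ℝ => (p * t) / ((p : ℝ) + 1)) ((p : ℝ) / (p + 1))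
      (Set.Icc (0 : ℝ) 1) t := by
    simpa using (((hasDerivWithinAt_id t (Set.Icc (0 : ℝ) 1)).const_mul (p : ℝ)).div_const
      ((p : ℝ) + 1))
  have c1 := (h _ (dq_mem1 p ht)).comp t d1 (fun s hs => dq_mem1 p hs)
  have c0 := (h _ (dq_mem0 p ht)).comp t d0 (fun s hs => dq_mem0 p hs)
  refine ((c1.sub c0).const_mul ((p : ℝ) + 1)).congr_deriv ?_
  rw [dq]; ring

lemma ratio_le (p : ℕ) : |(p / (p + 1) : ℝ)| ≤ 1 := by
  rw [abs_of_nonneg (by positivity), div_le_one (by positivity)]; linarith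

lemma dq_smooth (p : ℕ) {N : ℕ} : ∀ {M : ℝ} {f : ℝ → ℝ}, SmoothB (N + 1) M f →
    SmoothB N M (dq p f) := by
  induction N with
  | zero =>
    rintro M f ⟨h1, f', h2, h3⟩ x hx
    obtain ⟨c, hc, -, h⟩ := dq_mvt p h2 hx
    rw [h]; exact h3.bound c hc
  | succ N ih =>
    rintro M f ⟨h1, f', h2, h3⟩
    refine ⟨fun x hx => ?_, fun t => (p / (p + 1) : ℝ) * dq p f' t, fun x hx => dq_deriv p h2 hx,
      ((ih h3).const_mul _).mono ?_⟩
    · obtain ⟨c, hc, -, h⟩ := dq_mvt p h2 hx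
      rw [h]; exact h3.bound c hc
    · exact mul_le_of_le_one_left h3.nonneg (ratio_le p)

lemma dq_diff_bound (p : ℕ) {M : ℝ} {f f' : ℝ → ℝ}
    (h : ∀ x ∈ Set.Icc (0 : ℝ) 1, HasDerivWithinAt f (f' x) (Set.Icc (0 : ℝ) 1) x)
    (h' : SmoothB 1 M f') : ∀ x ∈ Set.Icc (0 : ℝ) 1, |dq p f x + (-1) * f' x| ≤ M / (p + 1) := by
  intro x hx
  obtain ⟨c, hc, h1, h2⟩ := dq_mvt p h hx
  rw [h2, neg_one_mul, ← sub_eq_add_neg, div_eq_mul_one_div]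
  exact (lip_aux h' hx hc).trans (mul_le_mul_of_nonneg_left h1 h'.nonneg)

lemma dq_diff (p : ℕ) {N : ℕ} : ∀ {M : ℝ} {f f' : ℝ → ℝ},
    (∀ x ∈ Set.Icc (0 : ℝ) 1, HasDerivWithinAt f (f' x) (Set.Icc (0 : ℝ) 1) x) →
    SmoothB (N + 1) M f' → SmoothB N ((N + 1) * (M / (p + 1))) (fun x => dq p f x + (-1) * f' x) := by
  induction N with
  | zero =>
    intro M f f' h h' x hx
    simpa using dq_diff_bound p h h' x hx
  | succ N ih =>
    intro M f f' h h'
    have hM := h'.nonneg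
    have hq : 0 ≤ M / ((p : ℝ) + 1) := by positivity
    have hb := dq_diff_bound p h (h'.of_le (by omega))
    obtain ⟨h1, f'', h2, h3⟩ := h'
    refine ⟨fun x hx => (hb x hx).trans ?_,
      fun x => (p / (p + 1) : ℝ) * dq p f' x + (-1) * f'' x,
      fun x hx => (dq_deriv p h hx).add ((h2 x hx).const_mul _), ?_⟩
    · push_cast
      nlinarith [(Nat.cast_nonneg N : (0 : ℝ) ≤ N)]
    · have k := ((ih h2 h3).const_mul (p / (p + 1) : ℝ)).add
        (h3.pred.const_mul (-(1 / ((p : ℝ) + 1))))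
      refine (k.mono ?_).congr ?_
      · have e : |-(1 / ((p : ℝ) + 1))| = 1 / (p + 1) := by
          rw [abs_neg, abs_of_nonneg (by positivity)]
        rw [e, one_div_mul_eq_div]
        have : 0 ≤ ((N : ℝ) + 1) * (M / (p + 1)) := by positivity
        have := mul_le_of_le_one_left this (ratio_le p)
        push_cast
        linarith
      · intro x _
        field_simp
        ring

lemma bern_eval (n : ℕ) (f : ℝ → ℝ) (x : ℝ) : bernsteinOp n f x =
    ∑ k ∈ Finset.range (n + 1), f (k / n) * (bernsteinPolynomial ℝ n k).eval x := by
  unfold bernsteinOp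
  refine Finset.sum_congr rfl fun k _ => ?_
  simp [bernsteinPolynomial]
  ring

lemma bern_deriv (p : ℕ) (f : ℝ → ℝ) (x : ℝ) :
    HasDerivAt (bernsteinOp (p + 1) f) (bernsteinOp p (dq p f) x) x := by
  have e : bernsteinOp (p + 1) f = fun x => ∑ k ∈ Finset.range (p + 1 + 1),
      f (k / (p + 1 : ℕ)) * (bernsteinPolynomial ℝ (p + 1) k).eval x := by
    funext x; exact bern_eval _ _ _
  rw [e]
  refine (HasDerivAt.fun_sum fun k _ =>
    ((bernsteinPolynomial ℝ (p + 1) k).hasDerivAt x).const_mul _).congr_deriv ?_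
  rw [bern_eval, Finset.sum_range_succ']
  simp only [bernsteinPolynomial.derivative_succ, bernsteinPolynomial.derivative_zero]
  have e1 : ∀ k ∈ Finset.range (p + 1), dq p f (k / p) =
      (p + 1) * (f ((k + 1) / (p + 1)) - f (k / (p + 1))) := by
    intro k hk
    rcases Nat.eq_zero_or_pos p with rfl | hp
    · have : k = 0 := by simpa using hk
      subst this; simp [dq]
    · have : (p : ℝ) ≠ 0 := by positivity
      rw [dq, mul_div_cancel₀ _ this]
  have e4 : ∑ k ∈ Finset.range (p + 1), dq p f (k / p) * (bernsteinPolynomial ℝ p k).eval x =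
      ∑ k ∈ Finset.range (p + 1), ((p : ℝ) + 1) * (f ((k + 1) / (p + 1)) - f (k / (p + 1))) *
      (bernsteinPolynomial ℝ p k).eval x :=
    Finset.sum_congr rfl fun k hk => by rw [e1 k hk]
  rw [e4]
  have e2 : ∑ k ∈ Finset.range (p + 1), f (k / (p + 1)) * (bernsteinPolynomial ℝ p k).eval x =
      ∑ k ∈ Finset.range (p + 1), f ((k + 1) / (p + 1)) *
        (bernsteinPolynomial ℝ p (k + 1)).eval x + f 0 * (bernsteinPolynomial ℝ p 0).eval x := by
    have := Finset.sum_range_succ (fun k : ℕ => f (k / (p + 1)) *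
      (bernsteinPolynomial ℝ p k).eval x) (p + 1)
    rw [bernsteinPolynomial.eq_zero_of_lt ℝ (Nat.lt_succ_self p), Polynomial.eval_zero, mul_zero,
      add_zero, Finset.sum_range_succ'] at this
    rw [← this]
    simp
  have e3 : ∑ k ∈ Finset.range (p + 1), ((p : ℝ) + 1) * (f ((k + 1) / (p + 1)) - f (k / (p + 1))) *
      (bernsteinPolynomial ℝ p k).eval x = (p + 1) * (∑ k ∈ Finset.range (p + 1),
        f ((k + 1) / (p + 1)) * (bernsteinPolynomial ℝ p k).eval x -
        ∑ k ∈ Finset.range (p + 1), f (k / (p + 1)) * (bernsteinPolynomial ℝ p k).eval x) := by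
    rw [← Finset.sum_sub_distrib, Finset.mul_sum]
    exact Finset.sum_congr rfl fun k _ => by ring
  rw [e3, e2, sub_add_eq_sub_sub, ← Finset.sum_sub_distrib, mul_sub, Finset.mul_sum]
  simp
  rw [sub_eq_add_neg]
  congr 1
  · exact Finset.sum_congr rfl fun k _ => by ring
  · ring

lemma bern_zero_order (n : ℕ) (hn : 0 < n) {f : ℝ → ℝ} {M : ℝ} (h : SmoothB 2 M f) :
    ∀ x ∈ Set.Icc (0 : ℝ) 1, |bernsteinOp n f x - f x| ≤ M / n := by
  intro x hx
  have hM := h.nonneg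
  obtain ⟨-, f', h1, h2⟩ := h
  have hn' : (n : ℝ) ≠ 0 := by positivity
  have hnp : (0 : ℝ) < n := by positivity
  set b : ℕ → ℝ := fun k => (bernsteinPolynomial ℝ n k).eval x with hb
  have s0 : ∑ k ∈ Finset.range (n + 1), b k = 1 := by
    have := congrArg (Polynomial.eval x) (bernsteinPolynomial.sum ℝ n)
    simpa [Polynomial.eval_finsetSum] using this
  have s1 : ∑ k ∈ Finset.range (n + 1), (k : ℝ) * b k = n * x := by
    have := congrArg (Polynomial.eval x) (bernsteinPolynomial.sum_smul ℝ n)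
    simpa [Polynomial.eval_finsetSum] using this
  have s2 : ∑ k ∈ Finset.range (n + 1), (n * x - k) ^ 2 * b k = n * x * (1 - x) := by
    have := congrArg (Polynomial.eval x) (bernsteinPolynomial.variance ℝ n)
    simpa [Polynomial.eval_finsetSum] using this
  have b0 : ∀ k, 0 ≤ b k := by
    intro k
    have h0 := hx.1
    have h1 : 0 ≤ 1 - x := by linarith [hx.2]
    simp only [hb, bernsteinPolynomial]
    simp
    positivity
  have e : bernsteinOp n f x - f x =
      ∑ k ∈ Finset.range (n + 1), (f (k / n) - f x - f' x * (k / n - x)) * b k := by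
    have : ∑ k ∈ Finset.range (n + 1), (f (k / n) - f x - f' x * (k / n - x)) * b k =
        ∑ k ∈ Finset.range (n + 1), (f (k / n) * b k + (f' x * x - f x) * b k
          - (f' x / n) * (k * b k)) := Finset.sum_congr rfl fun k _ => by ring
    rw [this, Finset.sum_sub_distrib, Finset.sum_add_distrib, ← Finset.mul_sum, ← Finset.mul_sum,
      s0, s1, ← bern_eval]
    field_simp
    ring
  rw [e]
  calc _ ≤ ∑ k ∈ Finset.range (n + 1), |(f (k / n) - f x - f' x * (k / n - x)) * b k| :=
        Finset.abs_sum_le_sum_abs _ _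
    _ ≤ ∑ k ∈ Finset.range (n + 1), (M / n ^ 2) * ((n * x - k) ^ 2 * b k) := by
        refine Finset.sum_le_sum fun k hk => ?_
        have hk' : (k : ℝ) ≤ n := by
          exact_mod_cast Nat.lt_succ_iff.mp (Finset.mem_range.mp hk)
        have := taylor_aux h1 h2 hx (y := k / n) ⟨by positivity, by
          rw [div_le_one hnp]; exact hk'⟩
        rw [abs_mul, abs_of_nonneg (b0 k), ← mul_assoc]
        refine mul_le_mul_of_nonneg_right (this.trans (le_of_eq ?_)) (b0 k)
        field_simp
        ring
    _ = M * (x * (1 - x)) / n := by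
        rw [← Finset.mul_sum, s2]; field_simp
    _ ≤ M / n := by
        gcongr
        have : x * (1 - x) ≤ 1 := by nlinarith [hx.1, hx.2]
        nlinarith

lemma bern_simul (m : ℕ) : ∃ C : ℝ, 0 < C ∧ ∀ n : ℕ, 0 < n → ∀ (f : ℝ → ℝ) (M : ℝ),
    SmoothB (m + 2) M f → SmoothB m (C * M / n) (fun y => bernsteinOp n f y - f y) := by
  induction m with
  | zero =>
    refine ⟨1, one_pos, fun n hn f M h x hx => ?_⟩
    rw [one_mul]
    exact bern_zero_order n hn h x hx
  | succ m ih =>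
    obtain ⟨C, hC, ih⟩ := ih
    refine ⟨2 * C + (m + 1), by positivity, fun n hn f M h => ?_⟩
    have hM := h.nonneg
    obtain ⟨p, rfl⟩ : ∃ p, n = p + 1 := ⟨n - 1, by omega⟩
    have hb := bern_zero_order (p + 1) hn (h.of_le (by omega : 2 ≤ m + 1 + 2))
    have hg := dq_smooth p (N := m + 2) h
    obtain ⟨h1, f', h2, h3⟩ := h
    have hd := dq_diff p h2 (h3.of_le (by omega : m + 1 ≤ m + 2))
    have hg' : SmoothB m (2 * C * M / (p + 1)) (fun y => bernsteinOp p (dq p f) y - dq p f y) := by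
      rcases Nat.eq_zero_or_pos p with rfl | hp
      · refine ((SmoothB.zero m).mono (by positivity)).congr ?_
        intro x _
        simp [bernsteinOp, dq]
      · refine (ih p hp _ M hg).mono ?_
        have : (1 : ℝ) ≤ p := by exact_mod_cast hp
        rw [div_le_div_iff₀ (by positivity) (by positivity)]
        have : 0 ≤ C * M := by positivity
        nlinarith
    refine ⟨fun x hx => (hb x hx).trans ?_, fun x => bernsteinOp p (dq p f) x - f' x,
      fun x hx => (bern_deriv p f x).hasDerivWithinAt.sub (h2 x hx), ?_⟩
    · gcongr
      have : (0 : ℝ) ≤ m := Nat.cast_nonneg m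
      nlinarith [mul_nonneg hC.le hM, mul_nonneg this hM]
    · refine ((hg'.add hd).mono (le_of_eq ?_)).congr ?_
      · push_cast; ring
      · intro x _; ring

lemma bern_iter (k : ℕ) : ∃ C : ℝ, 0 < C ∧ ∀ n : ℕ, 0 < n → ∀ (f : ℝ → ℝ) (M : ℝ),
    SmoothB (2 * k) M f → ∀ x ∈ Set.Icc (0 : ℝ) 1,
    |(fun g : ℝ → ℝ => fun y => bernsteinOp n g y - g y)^[k] f x| ≤ C * M / (n : ℝ) ^ k := by
  induction k with
  | zero =>
    refine ⟨1, one_pos, fun n hn f M h x hx => ?_⟩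
    simpa using h.bound x hx
  | succ k ih =>
    obtain ⟨C, hC, ih⟩ := ih
    obtain ⟨C', hC', hs⟩ := bern_simul (2 * k)
    refine ⟨C * C', by positivity, fun n hn f M h x hx => ?_⟩
    rw [Function.iterate_succ_apply]
    refine (ih n hn _ _ (hs n hn f M h) x hx).trans (le_of_eq ?_)
    have : (n : ℝ) ≠ 0 := by positivity
    field_simp
    ring

/-- Iterated Bernstein bias bound: for `f ∈ C^{2k}([0,1])` with all derivatives up to order
`2k` bounded by `M`, `‖(B_n - I)^k f‖_∞ ≤ C(k) · M · n^{-k}`. -/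
theorem iterated_bernstein_rate (k : ℕ) (hk : 0 < k) :
    ∃ C : ℝ, 0 < C ∧ ∀ n : ℕ, 0 < n → ∀ f : ℝ → ℝ, ∀ M : ℝ,
      ContDiffOn ℝ (2 * k) f (Set.Icc (0 : ℝ) 1) →
      (∀ j ≤ 2 * k, ∀ x ∈ Set.Icc (0 : ℝ) 1,
        |iteratedDerivWithin j f (Set.Icc (0 : ℝ) 1) x| ≤ M) →
      ∀ x ∈ Set.Icc (0 : ℝ) 1,
        |(fun g : ℝ → ℝ => fun y => bernsteinOp n g y - g y)^[k] f x| ≤ C * M / (n : ℝ) ^ k := by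
  obtain ⟨C, hC, h⟩ := bern_iter k
  refine ⟨C, hC, fun n hn f M hf hM => h n hn f M ?_⟩
  have key : ∀ N i : ℕ, i + N = 2 * k →
      SmoothB N M (iteratedDerivWithin i f (Set.Icc (0 : ℝ) 1)) := by
    intro N
    induction N with
    | zero => intro i hi; exact hM i (by omega)
    | succ N ih =>
      intro i hi
      refine ⟨hM i (by omega), iteratedDerivWithin (i + 1) f (Set.Icc (0 : ℝ) 1), ?_,
        ih (i + 1) (by omega)⟩
      intro x hx
      have hlt : (i : WithTop ℕ∞) < 2 * k := by
        have : i < 2 * k := by omega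
        exact_mod_cast this
      have := hf.differentiableOn_iteratedDerivWithin hlt (uniqueDiffOn_Icc zero_lt_one) x hx
      rw [iteratedDerivWithin_succ]
      exact this.hasDerivWithinAt
  have := key (2 * k) 0 (by omega)
  rwa [iteratedDerivWithin_zero] at this
end

section
/- Combining the iterated-Bernstein bound with the smoothness of g(q) = αq/(αq+1-q): for every positive integer k there is a constant C(α,k) such that for T ~ Binomial(n,q), |E[D_{n,k} g(T/n)] - g(q)| ≤ C(α,k) n^{-k}, where D_{n,k} = ∑_{j=0}^{k-1} C(k,j+1)(-1)^j B_n^j and B_n is the Bernstein operator. -/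
/-- The debiasing operator `D_{n,k} = ∑_{j=0}^{k-1} C(k,j+1)(-1)^j B_n^j`. -/
noncomputable def debiasOp (n k : ℕ) (f : ℝ → ℝ) (x : ℝ) : ℝ :=
  ∑ j ∈ Finset.range k, (k.choose (j + 1) : ℝ) * (-1 : ℝ) ^ j * (bernsteinOp n)^[j] f x

/-- The Bernstein operator as a linear map. -/
noncomputable def bernLin (n : ℕ) : Module.End ℝ (ℝ → ℝ) where
  toFun := bernsteinOp n
  map_add' f g := by
    funext x
    simp only [bernsteinOp, Pi.add_apply, ← Finset.sum_add_distrib]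
    exact Finset.sum_congr rfl fun _ _ => by ring
  map_smul' c f := by
    funext x
    simp only [bernsteinOp, Pi.smul_apply, smul_eq_mul, Finset.mul_sum, RingHom.id_apply]
    exact Finset.sum_congr rfl fun _ _ => by ring

theorem bernLin_apply (n : ℕ) (f : ℝ → ℝ) : bernLin n f = bernsteinOp n f := rfl

theorem bernLin_pow_apply (n j : ℕ) (f : ℝ → ℝ) :
    (bernLin n ^ j) f = (bernsteinOp n)^[j] f := by
  rw [Module.End.pow_apply]; rfl

/-- `B D = I - (I - B)^k`. -/
theorem debias_identity (n k : ℕ) (f : ℝ → ℝ) :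
    bernsteinOp n (debiasOp n k f) = f - ((1 - bernLin n) ^ k) f := by
  have h1 : debiasOp n k f = (∑ j ∈ Finset.range k,
      ((k.choose (j + 1) : ℝ) * (-1 : ℝ) ^ j) • (bernLin n ^ j)) f := by
    funext x
    simp [debiasOp, LinearMap.sum_apply, Finset.sum_apply, bernLin_pow_apply]
  have h2 : (1 - bernLin n) ^ k = 1 - bernLin n * (∑ j ∈ Finset.range k,
      ((k.choose (j + 1) : ℝ) * (-1 : ℝ) ^ j) • (bernLin n ^ j)) := by
    have hc : Commute (-bernLin n) 1 := Commute.one_right _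
    rw [sub_eq_neg_add, hc.add_pow, Finset.sum_range_succ', Finset.mul_sum, sub_eq_neg_add,
      ← Finset.sum_neg_distrib]
    congr 1
    · refine Finset.sum_congr rfl fun j _ => ?_
      have e : (-bernLin n) ^ (j + 1) = (-1 : ℝ) ^ (j + 1) • bernLin n ^ (j + 1) := by
        rw [← smul_pow, neg_one_smul]
      rw [e, mul_smul_comm, ← pow_succ', one_pow, mul_one, ← nsmul_eq_mul',
        ← Nat.cast_smul_eq_nsmul ℝ, smul_smul]
      have e2 : (k.choose (j + 1) : ℝ) * (-1) ^ (j + 1) = -((k.choose (j + 1) : ℝ) * (-1) ^ j) := by ring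
      rw [e2]
      exact neg_smul _ _
    · simp
  rw [h1, h2, ← bernLin_apply]
  simp [Module.End.mul_apply]

/-- factorial moments -/
theorem bern_choose (n i : ℕ) (hi : i ≤ n) (x : ℝ) :
    ∑ k ∈ Finset.range (n + 1), ((k.choose i : ℝ) / (n.choose i : ℝ)) * (n.choose k : ℝ) * x ^ k
      * (1 - x) ^ (n - k) = x ^ i := by
  have hpos : (0 : ℝ) < n.choose i := by exact_mod_cast Nat.choose_pos hi
  obtain ⟨d, rfl⟩ := Nat.exists_eq_add_of_le hi
  rw [show i + d + 1 = i + (d + 1) by ring, Finset.sum_range_add]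
  rw [Finset.sum_eq_zero, zero_add]
  · have hb : (∑ m ∈ Finset.range (d + 1), x ^ m * (1 - x) ^ (d - m) * (d.choose m : ℝ)) = 1 := by
      rw [← add_pow]; simp
    refine Eq.trans ?_ ((congrArg (x ^ i * ·) hb).trans (mul_one _))
    simp only [Finset.mul_sum]
    refine Finset.sum_congr rfl fun m hm => ?_
    have hm' : m ≤ d := by simpa [Nat.lt_succ_iff] using hm
    have e : ((i + d).choose (i + m) : ℝ) * ((i + m).choose i : ℝ)
        = ((i + d).choose i : ℝ) * (d.choose m : ℝ) := by
      have := Nat.choose_mul (n := i + d) (k := i + m) (s := i) (by omega)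
      rw [show i + d - i = d by omega, show i + m - i = m by omega] at this
      exact_mod_cast this
    rw [show i + d - (i + m) = d - m by omega, pow_add, div_mul_eq_mul_div, mul_comm ((i+m).choose i : ℝ), e]
    field_simp
  · intro k hk
    rw [Nat.choose_eq_zero_of_lt (by simpa using hk)]
    simp

/-- occupancy probabilities -/
theorem occ (n : ℕ) (hn : 0 < n) (m : ℕ) : ∃ p : ℕ → ℝ, (∀ i, 0 ≤ p i) ∧ (∀ i, n < i → p i = 0) ∧
    (∑ i ∈ Finset.range (m + 1), p i = 1) ∧ 1 - (m : ℝ) ^ 2 / (2 * n) ≤ p m ∧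
    (∀ k : ℕ, k ≤ n → ((k : ℝ) / n) ^ m =
      ∑ i ∈ Finset.range (m + 1), p i * ((k.choose i : ℝ) / (n.choose i : ℝ))) := by
  have hn' : (0 : ℝ) < n := by exact_mod_cast hn
  induction m with
  | zero =>
    refine ⟨fun i => if i = 0 then 1 else 0, ?_, ?_, ?_, ?_, ?_⟩
    · intro i; dsimp only; split_ifs <;> norm_num
    · intro i hi; simp; omega
    · simp
    · simp
    · simp
  | succ m ih =>
    obtain ⟨p, h0, hz, hs, hl, hk⟩ := ih
    -- truncate so that values above m vanish
    let P : ℕ → ℝ := fun i => if i ≤ m then p i else 0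
    let a : ℕ → ℝ := fun i => P i * (i / n)
    let b : ℕ → ℝ := fun i => P i * (1 - i / n)
    let p' : ℕ → ℝ := fun i => a i + (match i with | 0 => 0 | j + 1 => b j)
    have hP0 : ∀ i, 0 ≤ P i := fun i => by dsimp only [P]; split_ifs; exacts [h0 i, le_rfl]
    have hPz : ∀ i, n < i → P i = 0 := fun i hi => by simp [P, hz i hi]
    have hPm : P (m + 1) = 0 := by simp [P]
    have hPe : ∀ i ∈ Finset.range (m + 1), P i = p i := fun i hi => by
      have : i ≤ m := by simpa [Nat.lt_succ_iff] using hi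
      simp [P, this]
    have hb0 : ∀ i, 0 ≤ b i := by
      intro i
      rcases le_or_gt i n with h | h
      · have : (i : ℝ) / n ≤ 1 := by
          rw [div_le_one hn']; exact_mod_cast h
        exact mul_nonneg (hP0 i) (by linarith)
      · simp [b, hPz i h]
    have ha0 : ∀ i, 0 ≤ a i := fun i => mul_nonneg (hP0 i) (by positivity)
    have key : ∀ φ : ℕ → ℝ, ∑ i ∈ Finset.range (m + 1 + 1), p' i * φ i
        = ∑ i ∈ Finset.range (m + 1), p i * ((i / n) * φ i + (1 - i / n) * φ (i + 1)) := by
      intro φ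
      have e1 : ∑ i ∈ Finset.range (m + 1 + 1), a i * φ i
          = ∑ i ∈ Finset.range (m + 1), a i * φ i := by
        rw [Finset.sum_range_succ]; simp [a, hPm]
      have e2 : ∑ i ∈ Finset.range (m + 1 + 1), p' i * φ i
          = ∑ i ∈ Finset.range (m + 1 + 1), a i * φ i
            + ∑ i ∈ Finset.range (m + 1), b i * φ (i + 1) := by
        rw [Finset.sum_range_succ' (fun i => p' i * φ i), Finset.sum_range_succ' (fun i => a i * φ i)]
        simp only [p', add_mul, Finset.sum_add_distrib]
        ring
      rw [e2, e1, ← Finset.sum_add_distrib]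
      refine Finset.sum_congr rfl fun i hi => ?_
      rw [← hPe i hi]; simp only [a, b]; ring
    refine ⟨p', ?_, ?_, ?_, ?_, ?_⟩
    · intro i
      cases i with
      | zero => simpa [p'] using ha0 0
      | succ j => exact add_nonneg (ha0 _) (hb0 _)
    · intro i hi
      cases i with
      | zero => omega
      | succ j =>
        simp only [p', a, b, hPz _ hi]
        rcases Nat.lt_or_ge n j with h | h
        · simp [hPz j h]
        · have : j = n := by omega
          subst this
          simp [hn'.ne']
    · have := key (fun _ => 1)
      simp only [mul_one] at this
      rw [this]
      refine Eq.trans ?_ hs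
      exact Finset.sum_congr rfl fun i _ => by ring
    · have e : p' (m + 1) = p m * (1 - m / n) := by
        simp [p', a, b, hPm, P]
      have hp1 : p m ≤ 1 := by
        rw [← hs]
        exact Finset.single_le_sum (fun i _ => h0 i) (by simp)
      rw [e]
      have hq : (0 : ℝ) ≤ m / n := by positivity
      have : p m * (m / n) ≤ m / n := by nlinarith
      have e3 : ((m + 1 : ℕ) : ℝ) ^ 2 / (2 * n) = (m : ℝ) ^ 2 / (2 * n) + m / n + 1 / (2 * n) := by
        push_cast; field_simp; ring
      have : (0 : ℝ) ≤ 1 / (2 * n) := by positivity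
      rw [e3]; nlinarith
    · intro k hkn
      rw [key (fun i => (k.choose i : ℝ) / (n.choose i : ℝ)), pow_succ, hk k hkn, Finset.sum_mul]
      refine Finset.sum_congr rfl fun i _ => ?_
      rcases Nat.lt_or_ge n i with h | h
      · simp [hz i h]
      rw [mul_assoc]
      congr 1
      have r1 : (k.choose (i + 1) : ℝ) * (i + 1) = k.choose i * (k - i) := by
        rcases Nat.lt_or_ge k i with h' | h'
        · simp [Nat.choose_eq_zero_of_lt h', Nat.choose_eq_zero_of_lt (Nat.lt_succ_of_lt h')]
        · rw [← Nat.cast_sub h']; exact_mod_cast Nat.choose_succ_right_eq k i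
      have r2 : (n.choose (i + 1) : ℝ) * (i + 1) = n.choose i * (n - i) := by
        rw [← Nat.cast_sub h]; exact_mod_cast Nat.choose_succ_right_eq n i
      have hci : (n.choose i : ℝ) ≠ 0 := by exact_mod_cast (Nat.choose_pos h).ne'
      rcases Nat.lt_or_ge i n with h2 | h2
      · have hci2 : (n.choose (i + 1) : ℝ) ≠ 0 := by
          exact_mod_cast (Nat.choose_pos (Nat.succ_le_of_lt h2)).ne'
        have hi1 : (i : ℝ) + 1 ≠ 0 := by positivity
        have hni : (n : ℝ) - i ≠ 0 := by
          have : (i : ℝ) < n := by exact_mod_cast h2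
          linarith
        have t1 : (k.choose (i + 1) : ℝ) = k.choose i * (k - i) / (i + 1) := by
          rw [← r1]; field_simp
        have t2 : (n.choose (i + 1) : ℝ) = n.choose i * (n - i) / (i + 1) := by
          rw [← r2]; field_simp
        rw [t1, t2]
        field_simp
        ring
      · have : i = n := by omega
        subst this
        rcases Nat.lt_or_ge k i with h' | h'
        · simp [Nat.choose_eq_zero_of_lt h', hn'.ne']
        · have : k = i := by omega
          subst this
          simp [hn'.ne']

theorem bern_monomial (n : ℕ) (hn : 0 < n) (m : ℕ) : ∃ p : ℕ → ℝ, (∀ i, 0 ≤ p i) ∧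
    (∑ i ∈ Finset.range (m + 1), p i = 1) ∧ 1 - (m : ℝ) ^ 2 / (2 * n) ≤ p m ∧
    bernLin n (fun x => x ^ m) = ∑ i ∈ Finset.range (m + 1), p i • (fun x : ℝ => x ^ i) := by
  obtain ⟨p, h0, hz, hs, hl, hk⟩ := occ n hn m
  refine ⟨p, h0, hs, hl, ?_⟩
  funext x
  simp only [bernLin_apply, bernsteinOp, Finset.sum_apply, Pi.smul_apply, smul_eq_mul]
  have : ∀ k ∈ Finset.range (n + 1), ((k : ℝ) / n) ^ m * (n.choose k : ℝ) * x ^ k * (1 - x) ^ (n - k)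
      = ∑ i ∈ Finset.range (m + 1), p i * (((k.choose i : ℝ) / (n.choose i : ℝ))
        * (n.choose k : ℝ) * x ^ k * (1 - x) ^ (n - k)) := by
    intro k hkr
    rw [hk k (by simpa [Nat.lt_succ_iff] using hkr), Finset.sum_mul, Finset.sum_mul, Finset.sum_mul]
    exact Finset.sum_congr rfl fun _ _ => by ring
  rw [Finset.sum_congr rfl this, Finset.sum_comm]
  refine Finset.sum_congr rfl fun i _ => ?_
  rw [← Finset.mul_sum]
  rcases Nat.lt_or_ge n i with h | h
  · simp [hz i h]
  · rw [bern_choose n i h]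

theorem monomial_bound (n : ℕ) (hn : 0 < n) (k : ℕ) : ∀ m : ℕ, ∀ x ∈ Set.Icc (0 : ℝ) 1,
    |((1 - bernLin n) ^ k) (fun x => x ^ m) x| ≤ ((m : ℝ) ^ 2 / n) ^ k := by
  have hn' : (0 : ℝ) < n := by exact_mod_cast hn
  induction k with
  | zero =>
    intro m x hx
    simp only [pow_zero, Module.End.one_apply]
    rw [abs_of_nonneg (pow_nonneg hx.1 _)]
    exact pow_le_one₀ hx.1 hx.2
  | succ k ih =>
    intro m x hx
    obtain ⟨p, h0, hs, hl, hB⟩ := bern_monomial n hn m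
    have hs' := hs
    rw [Finset.sum_range_succ] at hs'
    have e : (1 - bernLin n) (fun x => x ^ m)
        = ∑ i ∈ Finset.range m, p i • ((fun x : ℝ => x ^ m) - (fun x : ℝ => x ^ i)) := by
      have : (1 - bernLin n) (fun x => x ^ m) = (fun x : ℝ => x ^ m) - bernLin n (fun x => x ^ m) := by
        simp
      rw [this, hB, Finset.sum_range_succ]
      simp only [smul_sub, Finset.sum_sub_distrib, ← Finset.sum_smul]
      have : p m = 1 - ∑ i ∈ Finset.range m, p i := by linarith
      rw [this, sub_smul, one_smul]
      abel
    rw [pow_succ, Module.End.mul_apply, e, map_sum]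
    simp only [map_smul, map_sub, Finset.sum_apply, Pi.smul_apply, Pi.sub_apply, smul_eq_mul]
    set M : ℝ := ((m : ℝ) ^ 2 / n) ^ k with hM
    have hM0 : 0 ≤ M := by positivity
    calc _ ≤ ∑ i ∈ Finset.range m, p i * (2 * M) := by
          refine (Finset.abs_sum_le_sum_abs _ _).trans (Finset.sum_le_sum fun i hi => ?_)
          rw [abs_mul, abs_of_nonneg (h0 i)]
          refine mul_le_mul_of_nonneg_left ?_ (h0 i)
          have him : (i : ℝ) ≤ m := by exact_mod_cast (Finset.mem_range.1 hi).le
          have h1 := ih m x hx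
          have h2 := ih i x hx
          have h3 : ((i : ℝ) ^ 2 / n) ^ k ≤ M := by rw [hM]; gcongr
          refine (abs_sub _ _).trans ?_
          linarith
      _ = (1 - p m) * (2 * M) := by rw [← Finset.sum_mul]; congr 1; linarith
      _ ≤ ((m : ℝ) ^ 2 / (2 * n)) * (2 * M) := by
          refine mul_le_mul_of_nonneg_right ?_ (by positivity)
          linarith
      _ = ((m : ℝ) ^ 2 / n) ^ (k + 1) := by rw [pow_succ ((m : ℝ) ^ 2 / n), ← hM]; field_simp

theorem hasSum_congr_aux {f g : ℕ → ℝ} {a : ℝ} (h : ∀ m, f m = g m) : HasSum f a ↔ HasSum g a := by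
  rw [funext h]

theorem hasSum_pow (n : ℕ) (hn : 0 < n) (F : ℕ → ℝ → ℝ) (f : ℝ → ℝ) (c : ℕ → ℝ)
    (h : ∀ x ∈ Set.Icc (0 : ℝ) 1, HasSum (fun m => c m * F m x) (f x)) (k : ℕ) :
    ∀ x ∈ Set.Icc (0 : ℝ) 1,
      HasSum (fun m => c m * ((1 - bernLin n) ^ k) (F m) x) (((1 - bernLin n) ^ k) f x) := by
  have hn' : (0 : ℝ) < n := by exact_mod_cast hn
  induction k with
  | zero => simpa using h
  | succ k ih =>
    intro x hx
    simp only [pow_succ', Module.End.mul_apply]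
    generalize ((1 - bernLin n) ^ k) f = f' at *
    have e : ∀ u : ℝ → ℝ, (1 - bernLin n) u x = u x - bernsteinOp n u x := fun u => by
      simp [bernLin_apply]
    simp only [e, mul_sub]
    refine (ih x hx).sub ?_
    simp only [bernsteinOp, Finset.mul_sum]
    refine hasSum_sum fun j hj => ?_
    have hj' : (j : ℝ) ≤ n := by exact_mod_cast Nat.lt_succ_iff.1 (Finset.mem_range.1 hj)
    have := ih ((j : ℝ) / n) ⟨by positivity, (div_le_one hn').2 hj'⟩
    have := this.mul_right ((n.choose j : ℝ) * x ^ j * (1 - x) ^ (n - j))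
    have hv : ∀ u : ℝ, u * (n.choose j : ℝ) * x ^ j * (1 - x) ^ (n - j)
        = u * ((n.choose j : ℝ) * x ^ j * (1 - x) ^ (n - j)) := fun u => by ring
    rw [hv]
    refine (hasSum_congr_aux fun m => ?_).2 this
    ring

theorem flip_pow (n : ℕ) (hn : 0 < n) (k : ℕ) (f : ℝ → ℝ) (x : ℝ) :
    ((1 - bernLin n) ^ k) (fun y => f (1 - y)) x = ((1 - bernLin n) ^ k) f (1 - x) := by
  have hn' : (n : ℝ) ≠ 0 := by exact_mod_cast hn.ne'
  induction k generalizing f x with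
  | zero => simp
  | succ k ih =>
    have : (1 - bernLin n) (fun y => f (1 - y)) = fun y => ((1 - bernLin n) f) (1 - y) := by
      funext y
      simp only [LinearMap.sub_apply, Module.End.one_apply, Pi.sub_apply, bernLin_apply, bernsteinOp]
      congr 1
      rw [← Finset.sum_range_reflect]
      refine Finset.sum_congr rfl fun j hj => ?_
      have hj' : j ≤ n := Nat.lt_succ_iff.1 (Finset.mem_range.1 hj)
      rw [show n + 1 - 1 - j = n - j by omega, Nat.choose_symm hj', Nat.cast_sub hj',
        show n - (n - j) = j by omega, show 1 - ((n : ℝ) - j) / n = j / n by field_simp; ring,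
        show 1 - (1 - y) = y by ring]
      ring
    rw [pow_succ, Module.End.mul_apply, this, ih, Module.End.mul_apply]

theorem rate_small (β : ℝ) (hβ : 0 < β) (hβ1 : β ≤ 1) (k : ℕ) :
    ∃ C : ℝ, 0 < C ∧ ∀ n : ℕ, 0 < n → ∀ q ∈ Set.Icc (0 : ℝ) 1,
      |((1 - bernLin n) ^ k) (fun x => β * x / (β * x + 1 - x)) q| ≤ C / (n : ℝ) ^ k := by
  have hr0 : 0 ≤ 1 - β := by linarith
  have hr1 : 1 - β < 1 := by linarith
  have hsum : Summable (fun m : ℕ => β * (1 - β) ^ m * (((m + 1 : ℕ) : ℝ) ^ 2) ^ k) := by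
    have s1 : Summable (fun m : ℕ => (m : ℝ) ^ (2 * k) * (1 - β) ^ m) :=
      summable_pow_mul_geometric_of_norm_lt_one _ (by rwa [Real.norm_of_nonneg hr0])
    have s2 := summable_geometric_of_lt_one hr0 hr1
    refine Summable.of_nonneg_of_le (fun m => by positivity) (fun m => ?_)
      ((s1.add s2).mul_left (β * 2 ^ (2 * k - 1)))
    have := add_pow_le (Nat.cast_nonneg (α := ℝ) m) zero_le_one (2 * k)
    rw [one_pow] at this
    rw [← pow_mul]
    push_cast
    calc _ ≤ β * (1 - β) ^ m * (2 ^ (2 * k - 1) * ((m : ℝ) ^ (2 * k) + 1)) := by gcongr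
      _ = _ := by ring
  refine ⟨∑' m : ℕ, β * (1 - β) ^ m * (((m + 1 : ℕ) : ℝ) ^ 2) ^ k + 1, ?_, ?_⟩
  · have : 0 ≤ ∑' m : ℕ, β * (1 - β) ^ m * (((m + 1 : ℕ) : ℝ) ^ 2) ^ k :=
      tsum_nonneg fun m => by positivity
    linarith
  intro n hn q hq
  have hn' : (0 : ℝ) < n := by exact_mod_cast hn
  have hS := hasSum_pow n hn (fun m x => x ^ (m + 1)) (fun x => β * x / (β * x + 1 - x))
    (fun m => β * (1 - β) ^ m) (by
      intro x hx
      have hlt : (1 - β) * x < 1 := by nlinarith [hx.1, hx.2]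
      have := (hasSum_geometric_of_lt_one (mul_nonneg hr0 hx.1) hlt).mul_left (β * x)
      have hv : β * x / (β * x + 1 - x) = β * x * (1 - (1 - β) * x)⁻¹ := by
        rw [div_eq_mul_inv]; congr 2; ring
      simp only [hv]
      refine (hasSum_congr_aux fun m => ?_).2 this
      rw [mul_pow]; ring) k q hq
  have hT := hsum.hasSum.div_const ((n : ℝ) ^ k)
  have hb : ∀ m : ℕ, |β * (1 - β) ^ m * ((1 - bernLin n) ^ k) (fun x => x ^ (m + 1)) q|
      ≤ β * (1 - β) ^ m * (((m + 1 : ℕ) : ℝ) ^ 2) ^ k / (n : ℝ) ^ k := by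
    intro m
    rw [abs_mul, abs_of_nonneg (by positivity : 0 ≤ β * (1 - β) ^ m), mul_div_assoc, ← div_pow]
    exact mul_le_mul_of_nonneg_left (monomial_bound n hn k (m + 1) q hq) (by positivity)
  have := hS.norm_le_of_bounded hT hb
  rw [Real.norm_eq_abs] at this
  refine this.trans ?_
  gcongr
  linarith

theorem debiased_binary_posterior_rate (α : ℝ) (hα : 0 < α) (k : ℕ) (hk : 0 < k) :
    ∃ C : ℝ, 0 < C ∧ ∀ n : ℕ, 0 < n → ∀ q ∈ Set.Icc (0 : ℝ) 1,
      |bernsteinOp n (debiasOp n k (fun x : ℝ => α * x / (α * x + 1 - x))) q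
          - α * q / (α * q + 1 - q)| ≤ C / (n : ℝ) ^ k := by
  rcases le_total α 1 with h1 | h1
  · obtain ⟨C, hC, h⟩ := rate_small α hα h1 k
    refine ⟨C, hC, fun n hn q hq => ?_⟩
    rw [debias_identity]
    simpa using h n hn q hq
  · obtain ⟨C, hC, h⟩ := rate_small α⁻¹ (by positivity) (inv_le_one_of_one_le₀ h1) k
    refine ⟨C, hC, fun n hn q hq => ?_⟩
    rw [debias_identity]
    have hq' : 1 - q ∈ Set.Icc (0 : ℝ) 1 := ⟨by linarith [hq.2], by linarith [hq.1]⟩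
    have hone : ((1 - bernLin n) ^ k) (fun x : ℝ => x ^ 0) q = 0 := by
      have := monomial_bound n hn k 0 q hq
      simpa [hk.ne'] using this
    have hx := h n hn (1 - q) hq'
    rw [← flip_pow n hn] at hx
    -- equality on [0,1] suffices
    have hS := hasSum_pow n hn
      (fun m => if m = 0 then (fun x : ℝ => x ^ 0) else
        (fun y => (fun x => α⁻¹ * x / (α⁻¹ * x + 1 - x)) (1 - y)))
      (fun x : ℝ => α * x / (α * x + 1 - x))
      (fun m => if m = 0 then 1 else if m = 1 then -1 else 0) (by
        intro x hx
        have hd : 0 < α * x + 1 - x := by nlinarith [hx.1]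
        have := hasSum_sum_of_ne_finset_zero (L := SummationFilter.unconditional ℕ) (s := Finset.range 2)
          (f := fun m : ℕ => (if m = 0 then (1 : ℝ) else if m = 1 then -1 else 0) *
            (if m = 0 then (fun x : ℝ => x ^ 0) else
        (fun y => (fun x => α⁻¹ * x / (α⁻¹ * x + 1 - x)) (1 - y))) x) (by
            intro b hb
            have : ¬ b < 2 := fun h => hb (Finset.mem_range.2 h)
            simp [show b ≠ 0 by omega, show b ≠ 1 by omega])
        convert this using 1
        have hd2 : α⁻¹ * (1 - x) + 1 - (1 - x) = (α * x + 1 - x) / α := by field_simp; ring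
        simp [Finset.sum_range_succ]
        rw [show α⁻¹ * (1 - x) + 1 - (1 - x) = (α * x + 1 - x) / α from hd2]
        field_simp
        ring) k q hq
    have hS2 := hasSum_sum_of_ne_finset_zero (L := SummationFilter.unconditional ℕ) (s := Finset.range 2)
      (f := fun m : ℕ => (if m = 0 then (1 : ℝ) else if m = 1 then -1 else 0) *
            ((1 - bernLin n) ^ k) (if m = 0 then (fun x : ℝ => x ^ 0) else
        (fun y => (fun x => α⁻¹ * x / (α⁻¹ * x + 1 - x)) (1 - y))) q) (by
            intro b hb
            have : ¬ b < 2 := fun h => hb (Finset.mem_range.2 h)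
            simp [show b ≠ 0 by omega, show b ≠ 1 by omega])
    have he := hS.unique hS2
    rw [Finset.sum_range_succ, Finset.sum_range_one] at he
    simp only [if_true, one_ne_zero, if_false, hone, mul_zero, zero_add, neg_mul, one_mul] at he
    rw [Pi.sub_apply, sub_sub_cancel_left, he, neg_neg]
    exact hx
end
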